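/- arXiv:2007.02175 — 4 statements merged into one kernel-verified Lean document; each statement's English description precedes it below -/
import Mathlib

section
/- Let $\rho_a, \kappa_a > 0$, $\Omega_\rho, \Omega_\kappa \ge 0$, and $\omega_\rho, \omega_\kappa, \gamma \in \mathbb{R}$ be real constants. Let $v, u, w : \mathbb{R} \to \mathbb{R}^d$ and $p, q, r : \mathbb{R} \to \mathbb{R}$ be differentiable at a point $t$, and let $G : \mathbb{R} \to \mathbb{R}^d$ and $D : \mathbb{R} \to \mathbb{R}$, $f : \mathbb{R} \to \mathbb{R}^d$, $g : \mathbb{R} \to \mathbb{R}$ be given functions. Suppose that at the point $t$ the following six equations hold: $\rho_a v' + G + \rho_a \Omega_\rho^2 u = f$; $\kappa_a^{-1} p' + D + \kappa_a^{-1} \Omega_\kappa^2 q = g$; $u' - v + \omega_\rho^2 w = 0$; $w' - u = 0$; $q' - p + \gamma q + \omega_\kappa^2 r = 0$; $r' - q = 0$. Define the weighted energy density $e(t) = \tfrac12\big(\rho_a \|v(t)\|^2 + \kappa_a^{-1} p(t)^2 + \rho_a \Omega_\rho^2 \|u(t)\|^2 + \rho_a \omega_\rho^2 \Omega_\rho^2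 \|w(t)\|^2 + \kappa_a^{-1} \Omega_\kappa^2 q(t)^2 + \kappa_a^{-1} \omega_\kappa^2 \Omega_\kappa^2 r(t)^2\big)$. Then $e$ is differentiable at $t$ and $e'(t) + \gamma\, \kappa_a^{-1} \Omega_\kappa^2\, q(t)^2 + \big( p(t)\, D(t) + \langle v(t), G(t) \rangle \big) = \langle f(t), v(t) \rangle + g(t)\, p(t)$; in particular, all the coupling terms between $(v,p)$ and the auxiliary variables $(u,w,q,r)$ cancel when the equations are tested with the weights $(v, p, \rho_a\Omega_\rho^2 u, \rho_a\omega_\rho^2\Omega_\rho^2 w, \kappa_a^{-1}\Omega_\kappa^2 q, \kappa_a^{-1}\omega_\kappa^2\Omega_\kappa^2 r)$. -/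
open RealInnerProductSpace

/-!
The equations for `(v, u, w)` and for `(p, q, r)` are two instances of one system in a real inner
product space, the first without damping and the second in `ℝ` with damping `γ`. In the energy rate
of that system the exchange terms `m Ω² ⟪v, u⟫` and `m ω² Ω² ⟪u, w⟫` each occur twice, with opposite
signs, so only the work of `f`, the flux term of `G` and the damping survive.
-/

/-- The energy density of a field `v` of inertia `m` coupled to a Drude–Lorentz oscillator `u` with
time integral `w`, where `Ω` is the coupling (plasma) frequency and `ω` the resonance frequency. The
arguments are the values of the fields, so the density along a motion is a composition. -/
noncomputable def drudeEnergy {E : Type*} [NormedAddCommGroup E] (m Ω ω : ℝ) (v u w : E) : ℝ :=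
  (1 / 2) * (m * ‖v‖ ^ 2 + m * Ω ^ 2 * ‖u‖ ^ 2 + m * ω ^ 2 * Ω ^ 2 * ‖w‖ ^ 2)

section Drude

variable {E : Type*} [NormedAddCommGroup E] [InnerProductSpace ℝ E]

theorem hasDerivAt_drudeEnergy (m Ω ω : ℝ) {v u w : ℝ → E} {v' u' w' : E} {t : ℝ}
    (hv : HasDerivAt v v' t) (hu : HasDerivAt u u' t) (hw : HasDerivAt w w' t) :
    HasDerivAt (fun s => drudeEnergy m Ω ω (v s) (u s) (w s))
      (m * ⟪v t, v'⟫ + m * Ω ^ 2 * ⟪u t, u'⟫ + m * ω ^ 2 * Ω ^ 2 * ⟪w t, w'⟫) t := by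
  have h := (((hv.norm_sq.const_mul m).add (hu.norm_sq.const_mul (m * Ω ^ 2))).add
    (hw.norm_sq.const_mul (m * ω ^ 2 * Ω ^ 2))).const_mul (1 / 2 : ℝ)
  exact h.congr_deriv (by ring)

theorem drude_power_balance {m Ω ω γ : ℝ} {v u w v' u' w' G f : E}
    (momentum : m • v' + G + (m * Ω ^ 2) • u = f)
    (oscillator : u' - v + γ • u + ω ^ 2 • w = 0) (primitive : w' - u = 0) :
    m * ⟪v, v'⟫ + m * Ω ^ 2 * ⟪u, u'⟫ + m * ω ^ 2 * Ω ^ 2 * ⟪w, w'⟫ =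
      ⟪f, v⟫ - γ * m * Ω ^ 2 * ‖u‖ ^ 2 - ⟪v, G⟫ := by
  have test_v : m * ⟪v, v'⟫ + ⟪v, G⟫ + m * Ω ^ 2 * ⟪v, u⟫ = ⟪f, v⟫ := by
    rw [real_inner_comm v f, ← momentum]
    simp only [inner_add_right, real_inner_smul_right]
  have test_u : ⟪u, u'⟫ - ⟪v, u⟫ + γ * ‖u‖ ^ 2 + ω ^ 2 * ⟪w, u⟫ = 0 := by
    have h := congrArg (fun x => ⟪u, x⟫) oscillator
    simpa only [inner_add_right, inner_sub_right, real_inner_smul_right, inner_zero_right,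
      real_inner_self_eq_norm_sq, real_inner_comm v u, real_inner_comm w u] using h
  have test_w : ⟪w, w'⟫ = ⟪w, u⟫ := by rw [sub_eq_zero.mp primitive]
  linear_combination test_v + m * Ω ^ 2 * test_u + m * ω ^ 2 * Ω ^ 2 * test_w

theorem hasDerivAt_drudeEnergy_of_equations {m Ω ω γ : ℝ}
    {v u w : ℝ → E} {v' u' w' G f : E} {t : ℝ}
    (hv : HasDerivAt v v' t) (hu : HasDerivAt u u' t) (hw : HasDerivAt w w' t)
    (momentum : m • v' + G + (m * Ω ^ 2) • u t = f)
    (oscillator : u' - v t + γ • u t + ω ^ 2 • w t = 0) (primitive : w' - u t = 0) :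
    HasDerivAt (fun s => drudeEnergy m Ω ω (v s) (u s) (w s))
      (⟪f, v t⟫ - γ * m * Ω ^ 2 * ‖u t‖ ^ 2 - ⟪v t, G⟫) t :=
  (hasDerivAt_drudeEnergy m Ω ω hv hu hw).congr_deriv
    (drude_power_balance momentum oscillator primitive)

-- `β` is the compressibility, `κa⁻¹` in the physical system.
theorem pointwise_energy_identity_general {ρ β Ωρ Ωκ ωρ ωκ γ : ℝ}
    {v u w : ℝ → E} {p q r : ℝ → ℝ} {t : ℝ} {v' u' w' G f : E} {p' q' r' D g : ℝ}
    (hv : HasDerivAt v v' t) (hu : HasDerivAt u u' t) (hw : HasDerivAt w w' t)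
    (hp : HasDerivAt p p' t) (hq : HasDerivAt q q' t) (hr : HasDerivAt r r' t)
    (e1 : ρ • v' + G + (ρ * Ωρ ^ 2) • u t = f)
    (e2 : β * p' + D + β * Ωκ ^ 2 * q t = g)
    (e3 : u' - v t + ωρ ^ 2 • w t = 0)
    (e4 : w' - u t = 0)
    (e5 : q' - p t + γ * q t + ωκ ^ 2 * r t = 0)
    (e6 : r' - q t = 0) :
    HasDerivAt
      (fun s => (1 / 2) * (ρ * ‖v s‖ ^ 2 + β * p s ^ 2 + ρ * Ωρ ^ 2 * ‖u s‖ ^ 2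
        + ρ * ωρ ^ 2 * Ωρ ^ 2 * ‖w s‖ ^ 2 + β * Ωκ ^ 2 * q s ^ 2
        + β * ωκ ^ 2 * Ωκ ^ 2 * r s ^ 2))
      (⟪f, v t⟫ + g * p t - γ * β * Ωκ ^ 2 * q t ^ 2 - (p t * D + ⟪v t, G⟫)) t := by
  have undamped : u' - v t + (0 : ℝ) • u t + ωρ ^ 2 • w t = 0 := by
    rw [zero_smul, add_zero, e3]
  have velocity := hasDerivAt_drudeEnergy_of_equations hv hu hw e1 undamped e4
  have pressure := hasDerivAt_drudeEnergy_of_equations hp hq hr e2 e5 e6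
  refine ((velocity.add pressure).congr_deriv ?_).congr_of_eventuallyEq (.of_forall fun s => ?_)
  · simp only [Real.inner_apply, Real.norm_eq_abs, sq_abs]
    ring
  · simp only [drudeEnergy, Pi.add_apply, Real.norm_eq_abs, sq_abs]
    ring

end Drude

/-- Pointwise energy identity for the Drude-type metamaterial acoustic system:
testing the six equations with the weights
`(v, p, ρa Ωρ² u, ρa ωρ² Ωρ² w, κa⁻¹ Ωκ² q, κa⁻¹ ωκ² Ωκ² r)` makes all coupling
terms between `(v, p)` and the auxiliary variables `(u, w, q, r)` cancel. -/
theorem pointwise_energy_identity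
    (d : ℕ) (ρa κa Ωρ Ωκ ωρ ωκ γ : ℝ)
    (hρa : 0 < ρa) (hκa : 0 < κa) (hΩρ : 0 ≤ Ωρ) (hΩκ : 0 ≤ Ωκ)
    (v u w G f : ℝ → EuclideanSpace ℝ (Fin d)) (p q r D g : ℝ → ℝ) (t : ℝ)
    (v' u' w' : EuclideanSpace ℝ (Fin d)) (p' q' r' : ℝ)
    (hv : HasDerivAt v v' t) (hu : HasDerivAt u u' t) (hw : HasDerivAt w w' t)
    (hp : HasDerivAt p p' t) (hq : HasDerivAt q q' t) (hr : HasDerivAt r r' t)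
    (e1 : ρa • v' + G t + (ρa * Ωρ ^ 2) • u t = f t)
    (e2 : κa⁻¹ * p' + D t + κa⁻¹ * Ωκ ^ 2 * q t = g t)
    (e3 : u' - v t + ωρ ^ 2 • w t = 0)
    (e4 : w' - u t = 0)
    (e5 : q' - p t + γ * q t + ωκ ^ 2 * r t = 0)
    (e6 : r' - q t = 0) :
    HasDerivAt
      (fun s => (1 / 2) * (ρa * ‖v s‖ ^ 2 + κa⁻¹ * p s ^ 2 + ρa * Ωρ ^ 2 * ‖u s‖ ^ 2
        + ρa * ωρ ^ 2 * Ωρ ^ 2 * ‖w s‖ ^ 2 + κa⁻¹ * Ωκ ^ 2 * q s ^ 2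
        + κa⁻¹ * ωκ ^ 2 * Ωκ ^ 2 * r s ^ 2))
      (⟪f t, v t⟫ + g t * p t - γ * κa⁻¹ * Ωκ ^ 2 * q t ^ 2
        - (p t * D t + ⟪v t, G t⟫)) t :=
  pointwise_energy_identity_general hv hu hw hp hq hr e1 e2 e3 e4 e5 e6
end

section
/- (Independence of the solution from the auxiliary initial data on the positive-index region; Theorem 2.3 for classical solutions.) Let $\Omega_P \subseteq \Omega$ and suppose $\Omega_\rho(x) = \Omega_\kappa(x) = 0$ for all $x \in \Omega_P$, while $\Omega_\rho(x) > 0$ and $\Omega_\kappa(x) > 0$ for all $x \in \Omega \setminus \overline{\Omega_P}$. Let $(v_1,p_1,u_1,w_1,q_1,r_1)$ and $(v_2,p_2,u_2,w_2,q_2,r_2)$ be two classical solutions of the metamaterial acoustic system on $[0,T]$ with the same data $f, g$. If $v_1(0,x) = v_2(0,x)$ and $p_1(0,x) = p_2(0,x)$ for all $x \in \Omega$, and $u_1(0,x)=u_2(0,x)$, $w_1(0,x)=w_2(0,x)$, $q_1(0,x)=q_2(0,x)$, $r_1(0,x)=r_2(0,x)$ for all $x \in \Omega \setminus \overline{\Omega_P}$,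 then for every $t \in [0,T]$ the same identities hold: $v_1(t,x) = v_2(t,x)$ and $p_1(t,x) = p_2(t,x)$ for all $x \in \Omega$, and $u_1(t,x)=u_2(t,x)$, $w_1(t,x)=w_2(t,x)$, $q_1(t,x)=q_2(t,x)$, $r_1(t,x)=r_2(t,x)$ for all $x \in \Omega \setminus \overline{\Omega_P}$. -/
open MeasureTheory

noncomputable section

/-- The compact rectangular box `∏ i, [a i, b i]` in `EuclideanSpace ℝ (Fin d)`. -/
def box {d : ℕ} (a b : EuclideanSpace ℝ (Fin d)) : Set (EuclideanSpace ℝ (Fin d)) :=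
  {x | ∀ i, a i ≤ x i ∧ x i ≤ b i}

/-- The divergence `∑ i ∂ᵢ Fᵢ` of a vector field on `EuclideanSpace ℝ (Fin d)`. -/
def divg {d : ℕ} (F : EuclideanSpace ℝ (Fin d) → EuclideanSpace ℝ (Fin d))
    (x : EuclideanSpace ℝ (Fin d)) : ℝ :=
  ∑ i, fderiv ℝ F x (EuclideanSpace.single i (1 : ℝ)) i

/-- A classical solution of the Drude-type metamaterial acoustic system on `[0,T] × box a b`,
with data `f`, `g` and homogeneous Dirichlet boundary condition `p = 0` on the boundary. -/
structure ClassicalSolution (d : ℕ) (a b : EuclideanSpace ℝ (Fin d))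
    (ρa κa Ωρ Ωκ : EuclideanSpace ℝ (Fin d) → ℝ) (ωρ ωκ γ T : ℝ)
    (f : ℝ → EuclideanSpace ℝ (Fin d) → EuclideanSpace ℝ (Fin d))
    (g : ℝ → EuclideanSpace ℝ (Fin d) → ℝ) where
  v : ℝ → EuclideanSpace ℝ (Fin d) → EuclideanSpace ℝ (Fin d)
  u : ℝ → EuclideanSpace ℝ (Fin d) → EuclideanSpace ℝ (Fin d)
  w : ℝ → EuclideanSpace ℝ (Fin d) → EuclideanSpace ℝ (Fin d)
  p : ℝ → EuclideanSpace ℝ (Fin d) → ℝ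
  q : ℝ → EuclideanSpace ℝ (Fin d) → ℝ
  r : ℝ → EuclideanSpace ℝ (Fin d) → ℝ
  smooth_v : ContDiff ℝ 1 (fun z : ℝ × EuclideanSpace ℝ (Fin d) => v z.1 z.2)
  smooth_u : ContDiff ℝ 1 (fun z : ℝ × EuclideanSpace ℝ (Fin d) => u z.1 z.2)
  smooth_w : ContDiff ℝ 1 (fun z : ℝ × EuclideanSpace ℝ (Fin d) => w z.1 z.2)
  smooth_p : ContDiff ℝ 1 (fun z : ℝ × EuclideanSpace ℝ (Fin d) => p z.1 z.2)
  smooth_q : ContDiff ℝ 1 (fun z : ℝ × EuclideanSpace ℝ (Fin d) => q z.1 z.2)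
  smooth_r : ContDiff ℝ 1 (fun z : ℝ × EuclideanSpace ℝ (Fin d) => r z.1 z.2)
  eq_v : ∀ t ∈ Set.Icc (0 : ℝ) T, ∀ x ∈ box a b,
    ρa x • deriv (fun s => v s x) t + gradient (p t) x + (ρa x * Ωρ x ^ 2) • u t x = f t x
  eq_p : ∀ t ∈ Set.Icc (0 : ℝ) T, ∀ x ∈ box a b,
    (κa x)⁻¹ * deriv (fun s => p s x) t + divg (v t) x + (κa x)⁻¹ * Ωκ x ^ 2 * q t x = g t x
  eq_u : ∀ t ∈ Set.Icc (0 : ℝ) T, ∀ x ∈ box a b,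
    deriv (fun s => u s x) t - v t x + ωρ ^ 2 • w t x = 0
  eq_w : ∀ t ∈ Set.Icc (0 : ℝ) T, ∀ x ∈ box a b,
    deriv (fun s => w s x) t - u t x = 0
  eq_q : ∀ t ∈ Set.Icc (0 : ℝ) T, ∀ x ∈ box a b,
    deriv (fun s => q s x) t - p t x + γ * q t x + ωκ ^ 2 * r t x = 0
  eq_r : ∀ t ∈ Set.Icc (0 : ℝ) T, ∀ x ∈ box a b,
    deriv (fun s => r s x) t - q t x = 0
  bc : ∀ t ∈ Set.Icc (0 : ℝ) T, ∀ x ∈ frontier (box a b), p t x = 0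

/-!
By linearity the difference of the two solutions solves the system without sources. In the natural
energy the auxiliary fields carry the weights `Ωρ ^ 2` and `Ωκ ^ 2`, which vanish on the closure of
`ΩP`, so the initial energy of the difference is zero whatever the auxiliary data are there. Since
the pressure vanishes on the boundary, the divergence theorem removes the flux term from the energy
balance and leaves only the damping, whence `|E'| ≤ 2 * |γ| * |E|` and Grönwall's inequality gives
`E = 0`. The energy density therefore vanishes, and with it `v` and `p`. Without this forcing,
`(u, w)` and `(q, r)` are at each point a (damped) harmonic oscillator, which stays at rest wherever
it starts at rest.
-/

section Box

variable {d : ℕ} {a b x : EuclideanSpace ℝ (Fin d)}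

theorem box_eq_preimage_Icc (a b : EuclideanSpace ℝ (Fin d)) :
    box a b = (EuclideanSpace.equiv (Fin d) ℝ).toHomeomorph ⁻¹' Set.Icc a.ofLp b.ofLp :=
  Set.ext fun _ => ⟨fun h => ⟨fun i => (h i).1, fun i => (h i).2⟩, fun h i => ⟨h.1 i, h.2 i⟩⟩

theorem isCompact_box (a b : EuclideanSpace ℝ (Fin d)) : IsCompact (box a b) := by
  rw [box_eq_preimage_Icc]
  exact (Homeomorph.isCompact_preimage _).2 isCompact_Icc

theorem measurableSet_box (a b : EuclideanSpace ℝ (Fin d)) : MeasurableSet (box a b) :=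
  (isCompact_box a b).measurableSet

theorem interior_box (a b : EuclideanSpace ℝ (Fin d)) :
    interior (box a b) = {x | ∀ i, a i < x i ∧ x i < b i} := by
  rw [box_eq_preimage_Icc, ← Homeomorph.preimage_interior, ← Set.pi_univ_Icc,
    interior_pi_set Set.finite_univ]
  ext x
  simp [EuclideanSpace.equiv]

theorem mem_frontier_box_of_eq (hx : x ∈ box a b) {i : Fin d} (hi : x i = a i ∨ x i = b i) :
    x ∈ frontier (box a b) := by
  refine ⟨subset_closure hx, fun hint => ?_⟩
  rw [interior_box] at hint
  exact hi.elim (hint i).1.ne' (hint i).2.ne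

theorem box_subset_closure_interior (hab : ∀ i, a i < b i) :
    box a b ⊆ closure (interior (box a b)) := by
  rw [box_eq_preimage_Icc, ← Homeomorph.preimage_interior, ← Homeomorph.preimage_closure,
    ← Set.pi_univ_Icc, interior_pi_set Set.finite_univ, closure_pi_set]
  refine Set.preimage_mono (Set.pi_mono fun i _ => ?_)
  rw [interior_Icc, closure_Ioo (hab i).ne]

theorem integrableOn_box_iff (a b : EuclideanSpace ℝ (Fin d))
    {φ : EuclideanSpace ℝ (Fin d) → ℝ} :
    IntegrableOn φ (box a b) ↔
      IntegrableOn (fun y => φ (WithLp.toLp 2 y)) (Set.Icc a.ofLp b.ofLp) := by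
  rw [← (PiLp.volume_preserving_toLp (Fin d)).integrableOn_comp_preimage
    (MeasurableEquiv.toLp 2 (Fin d → ℝ)).measurableEmbedding, box_eq_preimage_Icc]
  rfl

theorem setIntegral_box (a b : EuclideanSpace ℝ (Fin d)) (φ : EuclideanSpace ℝ (Fin d) → ℝ) :
    ∫ x in box a b, φ x = ∫ y in Set.Icc a.ofLp b.ofLp, φ (WithLp.toLp 2 y) := by
  rw [← (PiLp.volume_preserving_toLp (Fin d)).setIntegral_preimage_emb
    (MeasurableEquiv.toLp 2 (Fin d → ℝ)).measurableEmbedding φ, box_eq_preimage_Icc]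
  rfl

end Box

section Divergence

variable {d : ℕ} {a b x : EuclideanSpace ℝ (Fin d)}
  {F G : EuclideanSpace ℝ (Fin d) → EuclideanSpace ℝ (Fin d)}

theorem divg_fun_sub (hF : DifferentiableAt ℝ F x) (hG : DifferentiableAt ℝ G x) :
    divg (fun y => F y - G y) x = divg F x - divg G x := by
  simp [divg, fderiv_fun_sub hF hG]

theorem gradient_fun_sub {E : Type*} [NormedAddCommGroup E] [InnerProductSpace ℝ E]
    [CompleteSpace E] {φ ψ : E → ℝ} {x : E} (hφ : DifferentiableAt ℝ φ x)
    (hψ : DifferentiableAt ℝ ψ x) :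
    gradient (fun y => φ y - ψ y) x = gradient φ x - gradient ψ x := by
  simp [gradient, fderiv_fun_sub hφ hψ]

theorem gradient_apply (φ : EuclideanSpace ℝ (Fin d) → ℝ) (x : EuclideanSpace ℝ (Fin d))
    (i : Fin d) : gradient φ x i = fderiv ℝ φ x (EuclideanSpace.single i 1) := by
  rw [← toDual_gradient, InnerProductSpace.toDual_apply_apply, EuclideanSpace.inner_single_right]
  simp

theorem divg_fun_smul {φ : EuclideanSpace ℝ (Fin d) → ℝ} (hφ : DifferentiableAt ℝ φ x)
    (hF : DifferentiableAt ℝ F x) :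
    divg (fun y => φ y • F y) x = inner ℝ (gradient φ x) (F x) + φ x * divg F x := by
  simp only [divg, fderiv_fun_smul hφ hF, PiLp.inner_apply, gradient_apply, Finset.mul_sum,
    ← Finset.sum_add_distrib]
  refine Finset.sum_congr rfl fun i _ => ?_
  simp
  ring

theorem continuous_divg (hF : ContDiff ℝ 1 F) : Continuous (divg F) := by
  have hpartial (i : Fin d) : Continuous fun x => fderiv ℝ F x (EuclideanSpace.single i 1) :=
    (hF.continuous_fderiv one_ne_zero).clm_apply continuous_const
  exact continuous_finsetSum _ fun i _ => (EuclideanSpace.proj i).continuous.comp (hpartial i)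

theorem setIntegral_face_eq_zero {n : ℕ} {a b : EuclideanSpace ℝ (Fin (n + 1))}
    {F : EuclideanSpace ℝ (Fin (n + 1)) → EuclideanSpace ℝ (Fin (n + 1))} (hab : ∀ i, a i ≤ b i)
    (hbdry : ∀ x ∈ frontier (box a b), F x = 0) (i : Fin (n + 1)) {c : ℝ}
    (hc : c = a i ∨ c = b i) :
    ∫ y in Set.Icc (a.ofLp ∘ i.succAbove) (b.ofLp ∘ i.succAbove),
      F (WithLp.toLp 2 (i.insertNth c y)) i = 0 := by
  refine setIntegral_eq_zero_of_forall_eq_zero fun y hy => ?_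
  have hmem : WithLp.toLp 2 (i.insertNth c y) ∈ box a b := by
    rw [box_eq_preimage_Icc]
    refine Fin.insertNth_mem_Icc.2 ⟨?_, hy⟩
    rcases hc with rfl | rfl
    exacts [⟨le_rfl, hab i⟩, ⟨hab i, le_rfl⟩]
  simp [hbdry _ (mem_frontier_box_of_eq hmem (i := i) (by simpa using hc))]

theorem setIntegral_divg_eq_zero (hcont : ContinuousOn F (box a b))
    (hdiff : ∀ x ∈ interior (box a b), DifferentiableAt ℝ F x)
    (hint : IntegrableOn (divg F) (box a b)) (hbdry : ∀ x ∈ frontier (box a b), F x = 0) :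
    ∫ x in box a b, divg F x = 0 := by
  obtain hempty | ⟨x₀, hx₀⟩ := (box a b).eq_empty_or_nonempty
  · simp [hempty]
  obtain _ | n := d
  · simp [divg]
  have hab (i) : a i ≤ b i := (hx₀ i).1.trans (hx₀ i).2
  let L : (Fin (n + 1) → ℝ) →L[ℝ] EuclideanSpace ℝ (Fin (n + 1)) :=
    (EuclideanSpace.equiv (Fin (n + 1)) ℝ).symm
  have hmaps : Set.MapsTo L (Set.Icc a.ofLp b.ofLp) (box a b) := fun y hy => by
    rwa [box_eq_preimage_Icc]
  rw [setIntegral_box]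
  refine (integral_divergence_of_hasFDerivAt_off_countable' a.ofLp b.ofLp hab
    (fun i y => F (L y) i) (fun i y => EuclideanSpace.proj i ∘L fderiv ℝ F (L y) ∘L L) ∅
    Set.countable_empty (fun i => ?_) (fun y hy i => ?_) ?_).trans ?_
  · exact (EuclideanSpace.proj i).continuous.comp_continuousOn
      (hcont.comp L.continuous.continuousOn hmaps)
  · have hLy : L y ∈ interior (box a b) := by
      rw [interior_box]
      exact fun i => hy.1 i (Set.mem_univ i)
    exact (EuclideanSpace.proj i).hasFDerivAt.comp y
      ((hdiff _ hLy).hasFDerivAt.comp y L.hasFDerivAt)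
  · exact (integrableOn_box_iff a b).1 hint
  · exact Finset.sum_eq_zero fun i _ => sub_eq_zero.2 <|
      (setIntegral_face_eq_zero hab hbdry i (.inr rfl)).trans
        (setIntegral_face_eq_zero hab hbdry i (.inl rfl)).symm

end Divergence

section TimeSlices

variable {X W : Type*} [NormedAddCommGroup X] [NormedSpace ℝ X] [NormedAddCommGroup W]
  [NormedSpace ℝ W] {h : ℝ → X → W}

theorem contDiff_space_slice (hh : ContDiff ℝ 1 (fun z : ℝ × X => h z.1 z.2)) (t : ℝ) :
    ContDiff ℝ 1 (h t) :=
  hh.comp (contDiff_const.prodMk contDiff_id)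

theorem differentiable_time_slice (hh : ContDiff ℝ 1 (fun z : ℝ × X => h z.1 z.2)) (x : X) :
    Differentiable ℝ (fun s => h s x) :=
  (hh.comp (contDiff_id.prodMk contDiff_const)).differentiable one_ne_zero

theorem hasDerivAt_time_slice (hh : ContDiff ℝ 1 (fun z : ℝ × X => h z.1 z.2)) (t : ℝ) (x : X) :
    HasDerivAt (fun s => h s x) (deriv (fun s => h s x) t) t :=
  (differentiable_time_slice hh x t).hasDerivAt

theorem continuous_deriv_time_slice (hh : ContDiff ℝ 1 (fun z : ℝ × X => h z.1 z.2)) :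
    Continuous (fun z : ℝ × X => deriv (fun s => h s z.2) z.1) := by
  have hderiv (z : ℝ × X) : deriv (fun s => h s z.2) z.1 =
      fderiv ℝ (fun z : ℝ × X => h z.1 z.2) z (1, 0) :=
    ((hh.differentiable one_ne_zero z).hasFDerivAt.comp_hasDerivAt (f := fun s => (s, z.2)) z.1
      ((hasDerivAt_id z.1).prodMk (hasDerivAt_const z.1 z.2))).deriv
  simp only [hderiv]
  exact (hh.continuous_fderiv one_ne_zero).clm_apply continuous_const

end TimeSlices

section CompactIntegrals

variable {X : Type*} [TopologicalSpace X] [T2Space X] [MeasurableSpace X]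
  [OpensMeasurableSpace X] {μ : Measure X} [IsFiniteMeasureOnCompacts μ] {K : Set X}

theorem hasDerivAt_setIntegral_of_isCompact {W : Type*} [NormedAddCommGroup W]
    [NormedSpace ℝ W] [SecondCountableTopology W] {F F' : ℝ → X → W} (hK : IsCompact K)
    (hF : ∀ t, ContinuousOn (F t) K)
    (hF' : ContinuousOn (fun z : ℝ × X => F' z.1 z.2) (Set.univ ×ˢ K))
    (hderiv : ∀ t, ∀ x ∈ K, HasDerivAt (fun s => F s x) (F' t x) t) (t : ℝ) :
    HasDerivAt (fun s => ∫ x in K, F s x ∂μ) (∫ x in K, F' t x ∂μ) t := by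
  obtain ⟨C, hC⟩ := ((isCompact_closedBall t 1).prod hK).exists_bound_of_continuousOn
    (hF'.mono (Set.prod_mono_left (Set.subset_univ _)))
  have hF't : ContinuousOn (F' t) K :=
    hF'.comp (continuousOn_const.prodMk continuousOn_id) fun x hx => ⟨Set.mem_univ t, hx⟩
  have hmem : ∀ᵐ x ∂μ.restrict K, x ∈ K := ae_restrict_mem hK.measurableSet
  refine (hasDerivAt_integral_of_dominated_loc_of_deriv_le (Metric.closedBall_mem_nhds t one_pos)
    (.of_forall fun s => (hF s).aestronglyMeasurable hK.measurableSet)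
    ((hF t).integrableOn_compact hK) (hF't.aestronglyMeasurable hK.measurableSet)
    (bound := fun _ => C) ?_ (integrableOn_const hK.measure_ne_top) ?_).2
  · filter_upwards [hmem] with x hx s hs using hC (s, x) ⟨hs, hx⟩
  · filter_upwards [hmem] with x hx s _ using hderiv s x hx

theorem eqOn_zero_of_setIntegral_eq_zero [μ.IsOpenPosMeasure] {φ : X → ℝ} (hK : IsCompact K)
    (hKint : K ⊆ closure (interior K)) (hφ : ContinuousOn φ K)
    (hnonneg : ∀ x ∈ K, 0 ≤ φ x) (hzero : ∫ x in K, φ x ∂μ = 0) : Set.EqOn φ 0 K :=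
  have hae : φ =ᵐ[μ.restrict K] 0 :=
    (setIntegral_eq_zero_iff_of_nonneg_ae
      ((ae_restrict_mem hK.measurableSet).mono hnonneg) (hφ.integrableOn_compact hK)).1 hzero
  Measure.eqOn_of_ae_eq hae hφ continuousOn_const hKint

end CompactIntegrals

theorem eq_zero_of_dampedOscillator {V : Type*} [NormedAddCommGroup V] [NormedSpace ℝ V]
    {y z : ℝ → V} {γ k t₀ T : ℝ}
    (hy : ∀ t ∈ Set.Icc t₀ T, HasDerivAt y (-(γ • y t) - k • z t) t)
    (hz : ∀ t ∈ Set.Icc t₀ T, HasDerivAt z (y t) t) (hy₀ : y t₀ = 0) (hz₀ : z t₀ = 0) :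
    ∀ t ∈ Set.Icc t₀ T, y t = 0 ∧ z t = 0 := by
  have hderiv (t) (ht : t ∈ Set.Icc t₀ T) :
      HasDerivAt (fun s => (y s, z s)) (-(γ • y t) - k • z t, y t) t := (hy t ht).prodMk (hz t ht)
  have hbound (t : ℝ) : ‖(-(γ • y t) - k • z t, y t)‖ ≤ (|γ| + |k| + 1) * ‖(y t, z t)‖ := by
    have hyt : ‖y t‖ ≤ ‖(y t, z t)‖ := norm_fst_le (y t, z t)
    have hzt : ‖z t‖ ≤ ‖(y t, z t)‖ := norm_snd_le (y t, z t)
    refine norm_prod_le_iff.2 ⟨?_, hyt.trans (le_mul_of_one_le_left (norm_nonneg _) ?_)⟩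
    · calc ‖-(γ • y t) - k • z t‖
          ≤ |γ| * ‖y t‖ + |k| * ‖z t‖ := by
            simpa [norm_smul] using norm_sub_le (-(γ • y t)) (k • z t)
        _ ≤ |γ| * ‖(y t, z t)‖ + |k| * ‖(y t, z t)‖ := by gcongr
        _ ≤ (|γ| + |k| + 1) * ‖(y t, z t)‖ := by linarith [norm_nonneg (y t, z t)]
    · linarith [abs_nonneg γ, abs_nonneg k]
  intro t ht
  exact Prod.mk.inj <| eq_zero_of_abs_deriv_le_mul_abs_self_of_eq_zero_right
    (fun s hs => (hderiv s hs).continuousAt.continuousWithinAt)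
    (fun s hs => (hderiv s (Set.Ico_subset_Icc_self hs)).hasDerivWithinAt)
    (by simp [hy₀, hz₀]) (fun s _ => hbound s) t ht

/-- The standing assumptions on the material coefficients. Since the box is compact, positivity and
continuity subsume uniform bounds. -/
structure AdmissibleCoefficients {d : ℕ} (a b : EuclideanSpace ℝ (Fin d))
    (ρa κa Ωρ Ωκ : EuclideanSpace ℝ (Fin d) → ℝ) : Prop where
  continuous_ρa : Continuous ρa
  continuous_κa : Continuous κa
  continuous_Ωρ : Continuous Ωρ
  continuous_Ωκ : Continuous Ωκ
  ρa_pos : ∀ x ∈ box a b, 0 < ρa x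
  κa_pos : ∀ x ∈ box a b, 0 < κa x

namespace ClassicalSolution

variable {d : ℕ} {a b : EuclideanSpace ℝ (Fin d)} {ρa κa Ωρ Ωκ : EuclideanSpace ℝ (Fin d) → ℝ}
  {ωρ ωκ γ T : ℝ}

section Sub

variable {f₁ f₂ : ℝ → EuclideanSpace ℝ (Fin d) → EuclideanSpace ℝ (Fin d)}
  {g₁ g₂ : ℝ → EuclideanSpace ℝ (Fin d) → ℝ}

/-- The difference of two solutions, which by linearity solves the system with the difference of
the data. -/
def sub (S₁ : ClassicalSolution d a b ρa κa Ωρ Ωκ ωρ ωκ γ T f₁ g₁)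
    (S₂ : ClassicalSolution d a b ρa κa Ωρ Ωκ ωρ ωκ γ T f₂ g₂) :
    ClassicalSolution d a b ρa κa Ωρ Ωκ ωρ ωκ γ T (f₁ - f₂) (g₁ - g₂) where
  v t x := S₁.v t x - S₂.v t x
  u t x := S₁.u t x - S₂.u t x
  w t x := S₁.w t x - S₂.w t x
  p t x := S₁.p t x - S₂.p t x
  q t x := S₁.q t x - S₂.q t x
  r t x := S₁.r t x - S₂.r t x
  smooth_v := S₁.smooth_v.sub S₂.smooth_v
  smooth_u := S₁.smooth_u.sub S₂.smooth_u
  smooth_w := S₁.smooth_w.sub S₂.smooth_w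
  smooth_p := S₁.smooth_p.sub S₂.smooth_p
  smooth_q := S₁.smooth_q.sub S₂.smooth_q
  smooth_r := S₁.smooth_r.sub S₂.smooth_r
  eq_v t ht x hx := by
    rw [deriv_fun_sub (differentiable_time_slice S₁.smooth_v x t)
        (differentiable_time_slice S₂.smooth_v x t),
      gradient_fun_sub ((contDiff_space_slice S₁.smooth_p t).differentiable one_ne_zero x)
        ((contDiff_space_slice S₂.smooth_p t).differentiable one_ne_zero x),
      Pi.sub_apply, Pi.sub_apply]
    linear_combination (norm := module) S₁.eq_v t ht x hx - S₂.eq_v t ht x hx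
  eq_p t ht x hx := by
    rw [deriv_fun_sub (differentiable_time_slice S₁.smooth_p x t)
        (differentiable_time_slice S₂.smooth_p x t),
      divg_fun_sub ((contDiff_space_slice S₁.smooth_v t).differentiable one_ne_zero x)
        ((contDiff_space_slice S₂.smooth_v t).differentiable one_ne_zero x),
      Pi.sub_apply, Pi.sub_apply]
    linear_combination S₁.eq_p t ht x hx - S₂.eq_p t ht x hx
  eq_u t ht x hx := by
    rw [deriv_fun_sub (differentiable_time_slice S₁.smooth_u x t)
      (differentiable_time_slice S₂.smooth_u x t)]
    linear_combination (norm := module) S₁.eq_u t ht x hx - S₂.eq_u t ht x hx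
  eq_w t ht x hx := by
    rw [deriv_fun_sub (differentiable_time_slice S₁.smooth_w x t)
      (differentiable_time_slice S₂.smooth_w x t)]
    linear_combination (norm := module) S₁.eq_w t ht x hx - S₂.eq_w t ht x hx
  eq_q t ht x hx := by
    rw [deriv_fun_sub (differentiable_time_slice S₁.smooth_q x t)
      (differentiable_time_slice S₂.smooth_q x t)]
    linear_combination S₁.eq_q t ht x hx - S₂.eq_q t ht x hx
  eq_r t ht x hx := by
    rw [deriv_fun_sub (differentiable_time_slice S₁.smooth_r x t)
      (differentiable_time_slice S₂.smooth_r x t)]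
    linear_combination S₁.eq_r t ht x hx - S₂.eq_r t ht x hx
  bc t ht x hx := by rw [S₁.bc t ht x hx, S₂.bc t ht x hx, sub_zero]

end Sub

variable {f : ℝ → EuclideanSpace ℝ (Fin d) → EuclideanSpace ℝ (Fin d)}
  {g : ℝ → EuclideanSpace ℝ (Fin d) → ℝ}
  (S : ClassicalSolution d a b ρa κa Ωρ Ωκ ωρ ωκ γ T f g)

/-- Twice the energy density of the metamaterial system. The auxiliary fields are weighted by
`Ωρ ^ 2` and `Ωκ ^ 2`, so their values do not count where these coefficients vanish. -/
def energyDensity (t : ℝ) (x : EuclideanSpace ℝ (Fin d)) : ℝ :=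
  ρa x * ‖S.v t x‖ ^ 2 + (κa x)⁻¹ * S.p t x ^ 2
    + ρa x * Ωρ x ^ 2 * (‖S.u t x‖ ^ 2 + ωρ ^ 2 * ‖S.w t x‖ ^ 2)
    + (κa x)⁻¹ * Ωκ x ^ 2 * (S.q t x ^ 2 + ωκ ^ 2 * S.r t x ^ 2)

/-- The time derivative of `energyDensity`, written in terms of those of the fields. -/
def energyDensityRate (t : ℝ) (x : EuclideanSpace ℝ (Fin d)) : ℝ :=
  2 * (ρa x * inner ℝ (S.v t x) (deriv (fun s => S.v s x) t)
    + (κa x)⁻¹ * (S.p t x * deriv (fun s => S.p s x) t)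
    + ρa x * Ωρ x ^ 2 * (inner ℝ (S.u t x) (deriv (fun s => S.u s x) t)
      + ωρ ^ 2 * inner ℝ (S.w t x) (deriv (fun s => S.w s x) t))
    + (κa x)⁻¹ * Ωκ x ^ 2 * (S.q t x * deriv (fun s => S.q s x) t
      + ωκ ^ 2 * (S.r t x * deriv (fun s => S.r s x) t)))

/-- Twice the total energy in the box. -/
def energy (t : ℝ) : ℝ :=
  ∫ x in box a b, S.energyDensity t x

theorem hasDerivAt_energyDensity (t : ℝ) (x : EuclideanSpace ℝ (Fin d)) :
    HasDerivAt (fun s => S.energyDensity s x) (S.energyDensityRate t x) t := by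
  have hv := (hasDerivAt_time_slice S.smooth_v t x).norm_sq.const_mul (ρa x)
  have hp := ((hasDerivAt_time_slice S.smooth_p t x).pow 2).const_mul (κa x)⁻¹
  have hu := (hasDerivAt_time_slice S.smooth_u t x).norm_sq
  have hw := (hasDerivAt_time_slice S.smooth_w t x).norm_sq.const_mul (ωρ ^ 2)
  have hq := (hasDerivAt_time_slice S.smooth_q t x).pow 2
  have hr := ((hasDerivAt_time_slice S.smooth_r t x).pow 2).const_mul (ωκ ^ 2)
  refine (((hv.add hp).add ((hu.add hw).const_mul (ρa x * Ωρ x ^ 2))).add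
    ((hq.add hr).const_mul ((κa x)⁻¹ * Ωκ x ^ 2))).congr_deriv ?_
  simp only [energyDensityRate]
  ring

theorem continuousOn_energyDensity (hcoef : AdmissibleCoefficients a b ρa κa Ωρ Ωκ) (t : ℝ) :
    ContinuousOn (S.energyDensity t) (box a b) := by
  obtain ⟨hρ, hκ, hΩρ, hΩκ, -, hκpos⟩ := hcoef
  have hκ₀ : ∀ x ∈ box a b, κa x ≠ 0 := fun x hx => (hκpos x hx).ne'
  have hv := (contDiff_space_slice S.smooth_v t).continuous
  have hp := (contDiff_space_slice S.smooth_p t).continuous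
  have hu := (contDiff_space_slice S.smooth_u t).continuous
  have hw := (contDiff_space_slice S.smooth_w t).continuous
  have hq := (contDiff_space_slice S.smooth_q t).continuous
  have hr := (contDiff_space_slice S.smooth_r t).continuous
  unfold energyDensity
  fun_prop (disch := assumption)

theorem continuousOn_energyDensityRate (hcoef : AdmissibleCoefficients a b ρa κa Ωρ Ωκ) :
    ContinuousOn (fun z : ℝ × EuclideanSpace ℝ (Fin d) => S.energyDensityRate z.1 z.2)
      (Set.univ ×ˢ box a b) := by
  obtain ⟨hρ, hκ, hΩρ, hΩκ, -, hκpos⟩ := hcoef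
  have hκinv : ContinuousOn (fun z : ℝ × EuclideanSpace ℝ (Fin d) => (κa z.2)⁻¹)
      (Set.univ ×ˢ box a b) :=
    (hκ.comp continuous_snd).continuousOn.inv₀ fun z hz => (hκpos z.2 hz.2).ne'
  have hρ' : Continuous fun z : ℝ × EuclideanSpace ℝ (Fin d) => ρa z.2 := by fun_prop
  have hΩρ' : Continuous fun z : ℝ × EuclideanSpace ℝ (Fin d) => Ωρ z.2 ^ 2 := by fun_prop
  have hΩκ' : Continuous fun z : ℝ × EuclideanSpace ℝ (Fin d) => Ωκ z.2 ^ 2 := by fun_prop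
  have hv := S.smooth_v.continuous.inner (𝕜 := ℝ) (continuous_deriv_time_slice S.smooth_v)
  have hp := S.smooth_p.continuous.mul (continuous_deriv_time_slice S.smooth_p)
  have hu := S.smooth_u.continuous.inner (𝕜 := ℝ) (continuous_deriv_time_slice S.smooth_u)
  have hw := S.smooth_w.continuous.inner (𝕜 := ℝ) (continuous_deriv_time_slice S.smooth_w)
  have hq := S.smooth_q.continuous.mul (continuous_deriv_time_slice S.smooth_q)
  have hr := S.smooth_r.continuous.mul (continuous_deriv_time_slice S.smooth_r)
  exact continuousOn_const.mul
    (((((hρ'.mul hv).continuousOn.add (hκinv.mul hp.continuousOn)).add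
      ((hρ'.mul hΩρ').mul (hu.add (hw.const_mul (ωρ ^ 2)))).continuousOn)).add
      ((hκinv.mul hΩκ'.continuousOn).mul (hq.add (hr.const_mul (ωκ ^ 2))).continuousOn))

theorem energyDensityRate_add_divg {t : ℝ} (ht : t ∈ Set.Icc 0 T) {x : EuclideanSpace ℝ (Fin d)}
    (hx : x ∈ box a b) :
    S.energyDensityRate t x + 2 * divg (fun y => S.p t y • S.v t y) x =
      2 * (inner ℝ (S.v t x) (f t x) + S.p t x * g t x
        - γ * ((κa x)⁻¹ * Ωκ x ^ 2 * S.q t x ^ 2)) := by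
  have hdivg := divg_fun_smul ((contDiff_space_slice S.smooth_p t).differentiable one_ne_zero x)
    ((contDiff_space_slice S.smooth_v t).differentiable one_ne_zero x)
  have hv := congrArg (inner ℝ (S.v t x)) (S.eq_v t ht x hx)
  have hu := congrArg (inner ℝ (S.u t x)) (S.eq_u t ht x hx)
  have hw := congrArg (inner ℝ (S.w t x)) (S.eq_w t ht x hx)
  simp only [inner_add_right, inner_sub_right, inner_smul_right, inner_zero_right] at hv hu hw
  rw [real_inner_comm (gradient (S.p t) x)] at hv
  rw [real_inner_comm (S.v t x)] at hu
  rw [real_inner_comm (S.u t x)] at hw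
  rw [hdivg, energyDensityRate]
  linear_combination 2 * hv + 2 * S.p t x * S.eq_p t ht x hx + 2 * ρa x * Ωρ x ^ 2 * hu
    + 2 * ρa x * Ωρ x ^ 2 * ωρ ^ 2 * hw + 2 * (κa x)⁻¹ * Ωκ x ^ 2 * S.q t x * S.eq_q t ht x hx
    + 2 * (κa x)⁻¹ * Ωκ x ^ 2 * ωκ ^ 2 * S.r t x * S.eq_r t ht x hx

/-- The boundary flux drops out of the energy balance because `p` vanishes on the boundary. -/
theorem hasDerivAt_energy (hcoef : AdmissibleCoefficients a b ρa κa Ωρ Ωκ) {t : ℝ}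
    (ht : t ∈ Set.Icc 0 T) :
    HasDerivAt S.energy
      (∫ x in box a b, 2 * (inner ℝ (S.v t x) (f t x) + S.p t x * g t x
        - γ * ((κa x)⁻¹ * Ωκ x ^ 2 * S.q t x ^ 2))) t := by
  have hbox : IsCompact (box a b) := isCompact_box a b
  have hrate := S.continuousOn_energyDensityRate hcoef
  have hrate_int : IntegrableOn (S.energyDensityRate t) (box a b) :=
    (hrate.comp (continuousOn_const.prodMk continuousOn_id)
      fun x hx => ⟨Set.mem_univ t, hx⟩).integrableOn_compact hbox
  have hflux : ContDiff ℝ 1 (fun x => S.p t x • S.v t x) :=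
    (contDiff_space_slice S.smooth_p t).smul (contDiff_space_slice S.smooth_v t)
  have hdivg_int := (continuous_divg hflux).continuousOn.integrableOn_compact (μ := volume) hbox
  have hdivg_zero : ∫ x in box a b, divg (fun y => S.p t y • S.v t y) x = 0 :=
    setIntegral_divg_eq_zero hflux.continuous.continuousOn
      (fun x _ => hflux.differentiable one_ne_zero x) hdivg_int
      fun x hx => by rw [S.bc t ht x hx, zero_smul]
  refine (hasDerivAt_setIntegral_of_isCompact hbox (S.continuousOn_energyDensity hcoef) hrate
    (fun s x _ => S.hasDerivAt_energyDensity s x) t).congr_deriv ?_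
  rw [← setIntegral_congr_fun (measurableSet_box a b)
      fun x hx => S.energyDensityRate_add_divg ht hx,
    integral_add hrate_int (hdivg_int.const_mul 2), integral_const_mul, hdivg_zero, mul_zero,
    add_zero]

section Positivity

variable {x : EuclideanSpace ℝ (Fin d)}

theorem mul_norm_v_sq_le_energyDensity (hρ : 0 < ρa x) (hκ : 0 < κa x) (t : ℝ) :
    ρa x * ‖S.v t x‖ ^ 2 ≤ S.energyDensity t x := by
  simp only [energyDensity, add_assoc]
  exact le_add_of_nonneg_right (by positivity)

theorem inv_mul_p_sq_le_energyDensity (hρ : 0 < ρa x) (hκ : 0 < κa x) (t : ℝ) :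
    (κa x)⁻¹ * S.p t x ^ 2 ≤ S.energyDensity t x := by
  simp only [energyDensity, add_assoc]
  exact (le_add_of_nonneg_right (by positivity)).trans (le_add_of_nonneg_left (by positivity))

theorem inv_mul_q_sq_le_energyDensity (hρ : 0 < ρa x) (hκ : 0 < κa x) (t : ℝ) :
    (κa x)⁻¹ * Ωκ x ^ 2 * S.q t x ^ 2 ≤ S.energyDensity t x := by
  simp only [energyDensity, mul_add _ (S.q t x ^ 2)]
  exact (le_add_of_nonneg_right (by positivity)).trans (le_add_of_nonneg_left (by positivity))

theorem energyDensity_nonneg (hρ : 0 < ρa x) (hκ : 0 < κa x) (t : ℝ) :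
    0 ≤ S.energyDensity t x := by
  unfold energyDensity
  positivity

theorem v_eq_zero_of_energyDensity_eq_zero (hρ : 0 < ρa x) (hκ : 0 < κa x) {t : ℝ}
    (he : S.energyDensity t x = 0) : S.v t x = 0 := by
  have hle := he ▸ S.mul_norm_v_sq_le_energyDensity hρ hκ t
  simpa using (nonpos_of_mul_nonpos_right hle hρ).antisymm (sq_nonneg _)

theorem p_eq_zero_of_energyDensity_eq_zero (hρ : 0 < ρa x) (hκ : 0 < κa x) {t : ℝ}
    (he : S.energyDensity t x = 0) : S.p t x = 0 := by
  have hle := he ▸ S.inv_mul_p_sq_le_energyDensity hρ hκ t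
  simpa using (nonpos_of_mul_nonpos_right hle (inv_pos.2 hκ)).antisymm (sq_nonneg _)

end Positivity

theorem energyDensity_eq_zero_of_eq_zero {t : ℝ} {x : EuclideanSpace ℝ (Fin d)}
    (hv : S.v t x = 0) (hp : S.p t x = 0)
    (haux : (Ωρ x = 0 ∧ Ωκ x = 0) ∨ (S.u t x = 0 ∧ S.w t x = 0 ∧ S.q t x = 0 ∧ S.r t x = 0)) :
    S.energyDensity t x = 0 := by
  rcases haux with ⟨hΩρ, hΩκ⟩ | ⟨hu, hw, hq, hr⟩
  · simp [energyDensity, hv, hp, hΩρ, hΩκ]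
  · simp [energyDensity, hv, hp, hu, hw, hq, hr]

theorem energy_eq_zero (hcoef : AdmissibleCoefficients a b ρa κa Ωρ Ωκ)
    (hf : ∀ t ∈ Set.Icc 0 T, ∀ x ∈ box a b, f t x = 0)
    (hg : ∀ t ∈ Set.Icc 0 T, ∀ x ∈ box a b, g t x = 0) (h₀ : S.energy 0 = 0) :
    ∀ t ∈ Set.Icc 0 T, S.energy t = 0 := by
  have hbound (t) (ht : t ∈ Set.Icc 0 T) :
      ‖∫ x in box a b, 2 * (inner ℝ (S.v t x) (f t x) + S.p t x * g t x
        - γ * ((κa x)⁻¹ * Ωκ x ^ 2 * S.q t x ^ 2))‖ ≤ 2 * |γ| * ‖S.energy t‖ := by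
    refine le_trans ?_ (mul_le_mul_of_nonneg_left (le_abs_self _) (by positivity))
    rw [energy, ← integral_const_mul]
    refine norm_integral_le_of_norm_le (((S.continuousOn_energyDensity hcoef t).integrableOn_compact
      (isCompact_box a b)).const_mul _) ?_
    filter_upwards [ae_restrict_mem (measurableSet_box a b)] with x hx
    have hρ := hcoef.ρa_pos x hx
    have hκ := hcoef.κa_pos x hx
    have hq : 0 ≤ (κa x)⁻¹ * Ωκ x ^ 2 * S.q t x ^ 2 := by positivity
    rw [hf t ht x hx, hg t ht x hx, inner_zero_right, mul_zero, zero_add, zero_sub, norm_mul,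
      norm_neg, norm_mul, Real.norm_of_nonneg hq, Real.norm_two, Real.norm_eq_abs, ← mul_assoc]
    exact mul_le_mul_of_nonneg_left (S.inv_mul_q_sq_le_energyDensity hρ hκ t) (by positivity)
  exact eq_zero_of_abs_deriv_le_mul_abs_self_of_eq_zero_right
    (fun t ht => (S.hasDerivAt_energy hcoef ht).continuousAt.continuousWithinAt)
    (fun t ht => (S.hasDerivAt_energy hcoef (Set.Ico_subset_Icc_self ht)).hasDerivWithinAt) h₀
    (fun t ht => hbound t (Set.Ico_subset_Icc_self ht))

theorem energyDensity_eq_zero (hab : ∀ i, a i < b i)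
    (hcoef : AdmissibleCoefficients a b ρa κa Ωρ Ωκ)
    (hf : ∀ t ∈ Set.Icc 0 T, ∀ x ∈ box a b, f t x = 0)
    (hg : ∀ t ∈ Set.Icc 0 T, ∀ x ∈ box a b, g t x = 0)
    (h₀ : ∀ x ∈ box a b, S.energyDensity 0 x = 0) {t : ℝ} (ht : t ∈ Set.Icc 0 T) :
    ∀ x ∈ box a b, S.energyDensity t x = 0 :=
  have henergy₀ : S.energy 0 = 0 := setIntegral_eq_zero_of_forall_eq_zero h₀
  eqOn_zero_of_setIntegral_eq_zero (isCompact_box a b) (box_subset_closure_interior hab)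
    (S.continuousOn_energyDensity hcoef t)
    (fun x hx => S.energyDensity_nonneg (hcoef.ρa_pos x hx) (hcoef.κa_pos x hx) t)
    (S.energy_eq_zero hcoef hf hg henergy₀ t ht)

theorem v_p_eq_zero (hab : ∀ i, a i < b i)
    (hcoef : AdmissibleCoefficients a b ρa κa Ωρ Ωκ)
    (hf : ∀ t ∈ Set.Icc 0 T, ∀ x ∈ box a b, f t x = 0)
    (hg : ∀ t ∈ Set.Icc 0 T, ∀ x ∈ box a b, g t x = 0)
    (h₀ : ∀ x ∈ box a b, S.energyDensity 0 x = 0) {x : EuclideanSpace ℝ (Fin d)}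
    (hx : x ∈ box a b) : ∀ t ∈ Set.Icc 0 T, S.v t x = 0 ∧ S.p t x = 0 := by
  intro t ht
  have hρ := hcoef.ρa_pos x hx
  have hκ := hcoef.κa_pos x hx
  have he := S.energyDensity_eq_zero hab hcoef hf hg h₀ ht x hx
  exact ⟨S.v_eq_zero_of_energyDensity_eq_zero hρ hκ he,
    S.p_eq_zero_of_energyDensity_eq_zero hρ hκ he⟩

theorem u_w_eq_zero_of_v_eq_zero {x : EuclideanSpace ℝ (Fin d)} (hx : x ∈ box a b)
    (hv : ∀ t ∈ Set.Icc 0 T, S.v t x = 0) (hu₀ : S.u 0 x = 0) (hw₀ : S.w 0 x = 0) :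
    ∀ t ∈ Set.Icc 0 T, S.u t x = 0 ∧ S.w t x = 0 := by
  refine eq_zero_of_dampedOscillator (γ := 0) (k := ωρ ^ 2) (fun t ht => ?_) (fun t ht => ?_)
    hu₀ hw₀
  · refine (hasDerivAt_time_slice S.smooth_u t x).congr_deriv ?_
    linear_combination (norm := module) S.eq_u t ht x hx + hv t ht
  · exact (hasDerivAt_time_slice S.smooth_w t x).congr_deriv (sub_eq_zero.1 (S.eq_w t ht x hx))

theorem q_r_eq_zero_of_p_eq_zero {x : EuclideanSpace ℝ (Fin d)} (hx : x ∈ box a b)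
    (hp : ∀ t ∈ Set.Icc 0 T, S.p t x = 0) (hq₀ : S.q 0 x = 0) (hr₀ : S.r 0 x = 0) :
    ∀ t ∈ Set.Icc 0 T, S.q t x = 0 ∧ S.r t x = 0 := by
  refine eq_zero_of_dampedOscillator (γ := γ) (k := ωκ ^ 2) (fun t ht => ?_) (fun t ht => ?_)
    hq₀ hr₀
  · refine (hasDerivAt_time_slice S.smooth_q t x).congr_deriv ?_
    rw [smul_eq_mul, smul_eq_mul]
    linear_combination S.eq_q t ht x hx + hp t ht
  · exact (hasDerivAt_time_slice S.smooth_r t x).congr_deriv (sub_eq_zero.1 (S.eq_r t ht x hx))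

end ClassicalSolution

section Independence

variable {d : ℕ} {a b : EuclideanSpace ℝ (Fin d)} {ρa κa Ωρ Ωκ : EuclideanSpace ℝ (Fin d) → ℝ}
  {ωρ ωκ γ T : ℝ} {f : ℝ → EuclideanSpace ℝ (Fin d) → EuclideanSpace ℝ (Fin d)}
  {g : ℝ → EuclideanSpace ℝ (Fin d) → ℝ}

theorem independence_of_auxiliary_initial_data_general (hab : ∀ i, a i < b i)
    (hcoef : AdmissibleCoefficients a b ρa κa Ωρ Ωκ) {ΩP : Set (EuclideanSpace ℝ (Fin d))}
    (hPIM : ∀ x ∈ ΩP, Ωρ x = 0 ∧ Ωκ x = 0)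
    (S₁ S₂ : ClassicalSolution d a b ρa κa Ωρ Ωκ ωρ ωκ γ T f g)
    (hv0 : ∀ x ∈ box a b, S₁.v 0 x = S₂.v 0 x)
    (hp0 : ∀ x ∈ box a b, S₁.p 0 x = S₂.p 0 x)
    (hu0 : ∀ x ∈ box a b \ closure ΩP, S₁.u 0 x = S₂.u 0 x)
    (hw0 : ∀ x ∈ box a b \ closure ΩP, S₁.w 0 x = S₂.w 0 x)
    (hq0 : ∀ x ∈ box a b \ closure ΩP, S₁.q 0 x = S₂.q 0 x)
    (hr0 : ∀ x ∈ box a b \ closure ΩP, S₁.r 0 x = S₂.r 0 x) :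
    ∀ t ∈ Set.Icc (0 : ℝ) T,
      (∀ x ∈ box a b, S₁.v t x = S₂.v t x) ∧
      (∀ x ∈ box a b, S₁.p t x = S₂.p t x) ∧
      (∀ x ∈ box a b \ closure ΩP, S₁.u t x = S₂.u t x) ∧
      (∀ x ∈ box a b \ closure ΩP, S₁.w t x = S₂.w t x) ∧
      (∀ x ∈ box a b \ closure ΩP, S₁.q t x = S₂.q t x) ∧
      (∀ x ∈ box a b \ closure ΩP, S₁.r t x = S₂.r t x) := by
  let S := S₁.sub S₂
  have hΩρ : Set.EqOn Ωρ 0 (closure ΩP) :=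
    Set.EqOn.closure (fun x hx => (hPIM x hx).1) hcoef.continuous_Ωρ continuous_const
  have hΩκ : Set.EqOn Ωκ 0 (closure ΩP) :=
    Set.EqOn.closure (fun x hx => (hPIM x hx).2) hcoef.continuous_Ωκ continuous_const
  have hdensity₀ (x) (hx : x ∈ box a b) : S.energyDensity 0 x = 0 := by
    refine S.energyDensity_eq_zero_of_eq_zero (sub_eq_zero.2 (hv0 x hx))
      (sub_eq_zero.2 (hp0 x hx)) ?_
    by_cases hxP : x ∈ closure ΩP
    · exact .inl ⟨hΩρ hxP, hΩκ hxP⟩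
    · exact .inr ⟨sub_eq_zero.2 (hu0 x ⟨hx, hxP⟩), sub_eq_zero.2 (hw0 x ⟨hx, hxP⟩),
        sub_eq_zero.2 (hq0 x ⟨hx, hxP⟩), sub_eq_zero.2 (hr0 x ⟨hx, hxP⟩)⟩
  have hvp (x) (hx : x ∈ box a b) (t) (ht : t ∈ Set.Icc 0 T) : S.v t x = 0 ∧ S.p t x = 0 :=
    S.v_p_eq_zero hab hcoef (by simp) (by simp) hdensity₀ hx t ht
  have huw (x) (hx : x ∈ box a b \ closure ΩP) :
      ∀ t ∈ Set.Icc 0 T, S.u t x = 0 ∧ S.w t x = 0 :=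
    S.u_w_eq_zero_of_v_eq_zero hx.1 (fun t ht => (hvp x hx.1 t ht).1) (sub_eq_zero.2 (hu0 x hx))
      (sub_eq_zero.2 (hw0 x hx))
  have hqr (x) (hx : x ∈ box a b \ closure ΩP) :
      ∀ t ∈ Set.Icc 0 T, S.q t x = 0 ∧ S.r t x = 0 :=
    S.q_r_eq_zero_of_p_eq_zero hx.1 (fun t ht => (hvp x hx.1 t ht).2) (sub_eq_zero.2 (hq0 x hx))
      (sub_eq_zero.2 (hr0 x hx))
  exact fun t ht => ⟨fun x hx => sub_eq_zero.1 (hvp x hx t ht).1,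
    fun x hx => sub_eq_zero.1 (hvp x hx t ht).2, fun x hx => sub_eq_zero.1 (huw x hx t ht).1,
    fun x hx => sub_eq_zero.1 (huw x hx t ht).2, fun x hx => sub_eq_zero.1 (hqr x hx t ht).1,
    fun x hx => sub_eq_zero.1 (hqr x hx t ht).2⟩

end Independence

/-- Independence of the solution from the auxiliary initial data on the positive-index
region: if two classical solutions with the same data agree at `t = 0` in `(v, p)` on all
of `Ω` and in `(u, w, q, r)` on the negative-index region `Ω \ closure Ω_P`, then they
agree in the same sense at every later time. -/
theorem independence_of_auxiliary_initial_data (d : ℕ) (hd : 1 ≤ d)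
    (a b : EuclideanSpace ℝ (Fin d)) (hab : ∀ i, a i < b i)
    (ρa κa Ωρ Ωκ : EuclideanSpace ℝ (Fin d) → ℝ)
    (hρcont : Continuous ρa) (hκcont : Continuous κa)
    (hΩρcont : Continuous Ωρ) (hΩκcont : Continuous Ωκ)
    (hρbdd : ∃ c C : ℝ, 0 < c ∧ ∀ x ∈ box a b, c ≤ ρa x ∧ ρa x ≤ C)
    (hκbdd : ∃ c C : ℝ, 0 < c ∧ ∀ x ∈ box a b, c ≤ κa x ∧ κa x ≤ C)
    (hΩρ : ∀ x, 0 ≤ Ωρ x) (hΩκ : ∀ x, 0 ≤ Ωκ x)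
    (ωρ ωκ γ T : ℝ) (hωρ : 0 < ωρ) (hωκ : 0 < ωκ) (hγ : 0 ≤ γ) (hT : 0 < T)
    (f : ℝ → EuclideanSpace ℝ (Fin d) → EuclideanSpace ℝ (Fin d))
    (g : ℝ → EuclideanSpace ℝ (Fin d) → ℝ)
    (hf : Continuous (fun z : ℝ × EuclideanSpace ℝ (Fin d) => f z.1 z.2))
    (hg : Continuous (fun z : ℝ × EuclideanSpace ℝ (Fin d) => g z.1 z.2))
    (ΩP : Set (EuclideanSpace ℝ (Fin d))) (hΩP : ΩP ⊆ box a b)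
    (hPIM : ∀ x ∈ ΩP, Ωρ x = 0 ∧ Ωκ x = 0)
    (hNIM : ∀ x ∈ box a b \ closure ΩP, 0 < Ωρ x ∧ 0 < Ωκ x)
    (S₁ S₂ : ClassicalSolution d a b ρa κa Ωρ Ωκ ωρ ωκ γ T f g)
    (hv0 : ∀ x ∈ box a b, S₁.v 0 x = S₂.v 0 x)
    (hp0 : ∀ x ∈ box a b, S₁.p 0 x = S₂.p 0 x)
    (hu0 : ∀ x ∈ box a b \ closure ΩP, S₁.u 0 x = S₂.u 0 x)
    (hw0 : ∀ x ∈ box a b \ closure ΩP, S₁.w 0 x = S₂.w 0 x)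
    (hq0 : ∀ x ∈ box a b \ closure ΩP, S₁.q 0 x = S₂.q 0 x)
    (hr0 : ∀ x ∈ box a b \ closure ΩP, S₁.r 0 x = S₂.r 0 x) :
    ∀ t ∈ Set.Icc (0 : ℝ) T,
      (∀ x ∈ box a b, S₁.v t x = S₂.v t x) ∧
      (∀ x ∈ box a b, S₁.p t x = S₂.p t x) ∧
      (∀ x ∈ box a b \ closure ΩP, S₁.u t x = S₂.u t x) ∧
      (∀ x ∈ box a b \ closure ΩP, S₁.w t x = S₂.w t x) ∧
      (∀ x ∈ box a b \ closure ΩP, S₁.q t x = S₂.q t x) ∧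
      (∀ x ∈ box a b \ closure ΩP, S₁.r t x = S₂.r t x) := by
  obtain ⟨_, _, hcρ, hρ⟩ := hρbdd
  obtain ⟨_, _, hcκ, hκ⟩ := hκbdd
  exact independence_of_auxiliary_initial_data_general hab ⟨hρcont, hκcont, hΩρcont, hΩκcont,
    fun x hx => hcρ.trans_le (hρ x hx).1, fun x hx => hcκ.trans_le (hκ x hx).1⟩ hPIM S₁ S₂
    hv0 hp0 hu0 hw0 hq0 hr0
end
end

section
/- (Gronwall lemma for a squared energy.) Let $T > 0$, let $E : [0,T] \to \mathbb{R}$ be continuous and nonnegative and differentiable on $(0,T)$, let $g : [0,T] \to \mathbb{R}$ be continuous and nonnegative, and let $C \ge 0$. Suppose that for every $t \in (0,T)$ the derivative of $E^2$ satisfies $(E^2)'(t) \le C\, E(t)^2 + g(t)\, E(t)$. Then for every $t \in [0,T]$, $$E(t) \;\le\; e^{C t / 2}\Big( E(0) + \int_0^t g(s)\, ds \Big).$$ -/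
/-!
Where `E > 0`, dividing `(E²)' ≤ C E² + g E` by `2 E` gives `E' ≤ (C / 2) E + g / 2`, and Duhamel's
formula for this linear inequality yields the bound. Zeros of `E`, where the division is impossible,
are avoided by starting the linear estimate after the last time at which `E ≤ 0`, where the initial
term is at most `0`, or at the initial time if there is no such time.
-/

open Set MeasureTheory Real

section

variable {E f f' g φ : ℝ → ℝ} {a b C k t γ : ℝ}

theorem le_exp_mul_add_integral_of_deriv_right_le (hab : a ≤ b) (hf : ContinuousOn f (Icc a b))
    (hf' : ∀ t ∈ Ioo a b, HasDerivWithinAt f (f' t) (Ioi t) t)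
    (hφ : IntegrableOn φ (Icc a b)) (hle : ∀ t ∈ Ioo a b, f' t ≤ k * f t + φ t) :
    f b ≤ exp (k * (b - a)) * f a + ∫ s in a..b, exp (k * (b - s)) * φ s := by
  have hexp : Continuous fun s ↦ exp (k * (b - s)) := by fun_prop
  have hexp' (t : ℝ) : HasDerivAt (fun s ↦ exp (k * (b - s))) (exp (k * (b - t)) * -k) t := by
    simpa using (((hasDerivAt_id t).const_sub b).const_mul k).exp
  have hsub : exp (k * (b - b)) * f b - exp (k * (b - a)) * f a ≤
      ∫ s in a..b, exp (k * (b - s)) * φ s :=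
    intervalIntegral.sub_le_integral_of_hasDeriv_right_of_le hab (hexp.continuousOn.mul hf)
      (fun t ht ↦ (hexp' t).hasDerivWithinAt.mul (hf' t ht))
      (hφ.continuousOn_mul hexp.continuousOn isCompact_Icc) fun t ht ↦ by
        calc exp (k * (b - t)) * -k * f t + exp (k * (b - t)) * f' t
            = exp (k * (b - t)) * (f' t - k * f t) := by ring
          _ ≤ exp (k * (b - t)) * φ t := by
            gcongr
            linarith [hle t ht]
  rw [sub_self, mul_zero, exp_zero, one_mul] at hsub
  linarith

theorem deriv_le_of_deriv_sq_le (hE : DifferentiableAt ℝ E t) (hpos : 0 < E t)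
    (hle : deriv (fun s ↦ E s ^ 2) t ≤ C * E t ^ 2 + γ * E t) :
    deriv E t ≤ C / 2 * E t + γ / 2 := by
  have hderiv : deriv (fun s ↦ E s ^ 2) t = 2 * E t * deriv E t := by
    simpa using (hE.hasDerivAt.fun_pow 2).deriv
  refine le_of_mul_le_mul_left ?_ (mul_pos two_pos hpos)
  linarith

theorem exists_eq_left_or_le_forall_lt {α β : Type*} [LinearOrder α] [TopologicalSpace α]
    [OrderClosedTopology α] [CompactIccSpace α] [LinearOrder β] [TopologicalSpace β]
    [ClosedIicTopology β] {f : α → β} {a b : α} (hab : a ≤ b) (hf : ContinuousOn f (Icc a b))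
    (y : β) : ∃ c ∈ Icc a b, (c = a ∨ f c ≤ y) ∧ ∀ t ∈ Ioc c b, y < f t := by
  have hcompact : IsCompact (insert a (Icc a b ∩ f ⁻¹' Iic y)) :=
    (isCompact_Icc.of_isClosed_subset (hf.preimage_isClosed_of_isClosed isClosed_Icc isClosed_Iic)
      inter_subset_left).insert a
  obtain ⟨c, hc, hmax⟩ := hcompact.exists_isGreatest (insert_nonempty _ _)
  have hac : a ≤ c := hmax (mem_insert _ _)
  refine ⟨c, ?_, hc.imp_right And.right, fun t ht ↦ ?_⟩
  · rcases hc with rfl | hc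
    exacts [left_mem_Icc.2 hab, hc.1]
  · by_contra! hle
    exact ht.1.not_ge (hmax (.inr ⟨⟨hac.trans ht.1.le, ht.2⟩, hle⟩))

theorem le_exp_mul_add_integral_of_deriv_sq_le (hab : a ≤ b) (hE : ContinuousOn E (Icc a b))
    (hEa : 0 ≤ E a) (hEdiff : ∀ t ∈ Ioo a b, 0 < E t → DifferentiableAt ℝ E t)
    (hg : IntegrableOn g (Icc a b)) (hg₀ : ∀ t ∈ Icc a b, 0 ≤ g t)
    (hle : ∀ t ∈ Ioo a b, 0 < E t →
      deriv (fun s ↦ E s ^ 2) t ≤ C * E t ^ 2 + g t * E t) :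
    E b ≤ exp (C / 2 * (b - a)) * E a + ∫ s in a..b, exp (C / 2 * (b - s)) * (g s / 2) := by
  obtain ⟨c, ⟨hac, hcb⟩, hc, hpos⟩ := exists_eq_left_or_le_forall_lt hab hE 0
  have hsub : Icc c b ⊆ Icc a b := Icc_subset_Icc_left hac
  have hlinear : ∀ t ∈ Ioo c b, DifferentiableAt ℝ E t ∧ deriv E t ≤ C / 2 * E t + g t / 2 := by
    intro t ht
    have ht' : t ∈ Ioo a b := Ioo_subset_Ioo_left hac ht
    have hEt : 0 < E t := hpos t (Ioo_subset_Ioc_self ht)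
    exact ⟨hEdiff t ht' hEt, deriv_le_of_deriv_sq_le (hEdiff t ht' hEt) hEt (hle t ht' hEt)⟩
  have hinitial : exp (C / 2 * (b - c)) * E c ≤ exp (C / 2 * (b - a)) * E a := by
    rcases hc with rfl | hc
    · exact le_rfl
    · exact (mul_nonpos_of_nonneg_of_nonpos (exp_pos _).le hc).trans (by positivity)
  have hint : IntervalIntegrable (fun s ↦ exp (C / 2 * (b - s)) * (g s / 2)) volume a b :=
    (((intervalIntegrable_iff_integrableOn_Icc_of_le hab).2 hg).div_const 2).continuousOn_mul
      (by fun_prop)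
  have hintegral : ∫ s in c..b, exp (C / 2 * (b - s)) * (g s / 2) ≤
      ∫ s in a..b, exp (C / 2 * (b - s)) * (g s / 2) := by
    refine intervalIntegral.integral_mono_interval hac hcb le_rfl ?_ hint
    filter_upwards [ae_restrict_mem measurableSet_Ioc] with s hs
    exact mul_nonneg (exp_pos _).le (div_nonneg (hg₀ s (Ioc_subset_Icc_self hs)) zero_le_two)
  calc E b ≤ exp (C / 2 * (b - c)) * E c + ∫ s in c..b, exp (C / 2 * (b - s)) * (g s / 2) :=
        le_exp_mul_add_integral_of_deriv_right_le hcb (hE.mono hsub)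
          (fun t ht ↦ (hlinear t ht).1.hasDerivAt.hasDerivWithinAt)
          ((hg.mono_set hsub).div_const 2) fun t ht ↦ (hlinear t ht).2
    _ ≤ exp (C / 2 * (b - a)) * E a + ∫ s in a..b, exp (C / 2 * (b - s)) * (g s / 2) :=
        add_le_add hinitial hintegral

theorem integral_exp_mul_le_exp_mul_integral (hab : a ≤ b) (hk : 0 ≤ k)
    (hφ : IntegrableOn φ (Icc a b)) (hφ₀ : ∀ t ∈ Icc a b, 0 ≤ φ t) :
    ∫ s in a..b, exp (k * (b - s)) * φ s ≤ exp (k * (b - a)) * ∫ s in a..b, φ s := by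
  have hint : IntervalIntegrable φ volume a b :=
    (intervalIntegrable_iff_integrableOn_Icc_of_le hab).2 hφ
  rw [← intervalIntegral.integral_const_mul]
  refine intervalIntegral.integral_mono_on hab
    (hint.continuousOn_mul (by fun_prop)) (hint.const_mul _) fun s hs ↦ ?_
  have hφs : 0 ≤ φ s := hφ₀ s hs
  gcongr
  exact hs.1

theorem gronwall_squared_energy_general (hC : 0 ≤ C) (hE : ContinuousOn E (Icc a b))
    (hEa : 0 ≤ E a) (hEdiff : ∀ t ∈ Ioo a b, 0 < E t → DifferentiableAt ℝ E t)
    (hg : IntegrableOn g (Icc a b)) (hg₀ : ∀ t ∈ Icc a b, 0 ≤ g t)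
    (hle : ∀ t ∈ Ioo a b, 0 < E t →
      deriv (fun s ↦ E s ^ 2) t ≤ C * E t ^ 2 + g t * E t) :
    ∀ t ∈ Icc a b, E t ≤ exp (C * (t - a) / 2) * (E a + ∫ s in a..t, g s) := by
  intro t ht
  have hIcc : Icc a t ⊆ Icc a b := Icc_subset_Icc_right ht.2
  have hIoo : Ioo a t ⊆ Ioo a b := Ioo_subset_Ioo_right ht.2
  calc E t ≤ exp (C / 2 * (t - a)) * E a + ∫ s in a..t, exp (C / 2 * (t - s)) * (g s / 2) :=
        le_exp_mul_add_integral_of_deriv_sq_le ht.1 (hE.mono hIcc) hEa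
          (fun s hs ↦ hEdiff s (hIoo hs)) (hg.mono_set hIcc) (fun s hs ↦ hg₀ s (hIcc hs))
          fun s hs ↦ hle s (hIoo hs)
    _ ≤ exp (C / 2 * (t - a)) * E a + exp (C / 2 * (t - a)) * ∫ s in a..t, g s / 2 := by
        gcongr
        exact integral_exp_mul_le_exp_mul_integral ht.1 (div_nonneg hC zero_le_two)
          ((hg.mono_set hIcc).div_const 2) fun s hs ↦ div_nonneg (hg₀ s (hIcc hs)) zero_le_two
    _ ≤ exp (C / 2 * (t - a)) * E a + exp (C / 2 * (t - a)) * ∫ s in a..t, g s := by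
        rw [intervalIntegral.integral_div]
        gcongr
        exact half_le_self (intervalIntegral.integral_nonneg ht.1 fun s hs ↦ hg₀ s (hIcc hs))
    _ = exp (C * (t - a) / 2) * (E a + ∫ s in a..t, g s) := by
        rw [← mul_add, div_mul_eq_mul_div]

end

/-- Gronwall lemma for a squared energy: if `E ≥ 0` is continuous on `[0,T]`,
differentiable on `(0,T)`, and `(E²)' ≤ C E² + g E` there, then
`E(t) ≤ exp (C t / 2) (E 0 + ∫₀ᵗ g)`. -/
theorem gronwall_squared_energy (T : ℝ) (hT : 0 < T) (E g : ℝ → ℝ) (C : ℝ) (hC : 0 ≤ C)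
    (hEcont : ContinuousOn E (Set.Icc 0 T))
    (hEnonneg : ∀ t ∈ Set.Icc (0 : ℝ) T, 0 ≤ E t)
    (hEdiff : ∀ t ∈ Set.Ioo (0 : ℝ) T, DifferentiableAt ℝ E t)
    (hgcont : ContinuousOn g (Set.Icc 0 T))
    (hgnonneg : ∀ t ∈ Set.Icc (0 : ℝ) T, 0 ≤ g t)
    (hineq : ∀ t ∈ Set.Ioo (0 : ℝ) T,
      deriv (fun s => E s ^ 2) t ≤ C * E t ^ 2 + g t * E t) :
    ∀ t ∈ Set.Icc (0 : ℝ) T,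
      E t ≤ Real.exp (C * t / 2) * (E 0 + ∫ s in (0 : ℝ)..t, g s) := by
  simpa only [sub_zero] using gronwall_squared_energy_general hC hEcont
    (hEnonneg 0 (left_mem_Icc.2 hT.le)) (fun t ht _ ↦ hEdiff t ht) hgcont.integrableOn_Icc hgnonneg
    fun t ht _ ↦ hineq t ht
end

section
/- (Trapezoidal time-discretization error for Banach-space-valued functions.) Let $X$ be a real Banach space, let $a < b$ be real numbers, and let $f : \mathbb{R} \to X$ be three times continuously differentiable on an open set containing $[a,b]$. Then $$\Big\| f(b) - f(a) - \frac{b-a}{2}\big( f'(a) + f'(b) \big) \Big\| \;\le\; \frac{(b-a)^2}{8} \int_a^b \| f'''(s) \|\, ds.$$ -/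
/-!
Let `P x = f x - (x - (a + b) / 2) • f' x + ((x - a) * (x - b) / 2) • f'' x`. Each coefficient is
minus the derivative of the next, so `P'` telescopes to `((x - a) * (x - b) / 2) • f'''`. The
quadratic coefficient vanishes at `a` and `b`, so `P b - P a` is exactly the trapezoidal error.
A displacement is at most the integral of the speed, in any normed space, and on `[a, b]` the
quadratic is at most `(b - a) ^ 2 / 8` in absolute value.
-/

open Set MeasureTheory

section IteratedDeriv

variable {𝕜 F : Type*} [NontriviallyNormedField 𝕜] [NormedAddCommGroup F] [NormedSpace 𝕜 F]
  {f : 𝕜 → F} {s : Set 𝕜} {n : WithTop ℕ∞} {k : ℕ}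

lemma hasDerivAt_iteratedDeriv_of_isOpen (hf : ContDiffOn 𝕜 n f s) (hs : IsOpen s) (hk : k < n)
    {x : 𝕜} (hx : x ∈ s) : HasDerivAt (iteratedDeriv k f) (iteratedDeriv (k + 1) f x) x := by
  rw [iteratedDeriv_succ]
  exact (((hf.differentiableOn_iteratedDerivWithin hk hs.uniqueDiffOn).congr
    (iteratedDerivWithin_of_isOpen hs).symm).differentiableAt (hs.mem_nhds hx)).hasDerivAt

lemma continuousOn_iteratedDeriv_of_isOpen (hf : ContDiffOn 𝕜 n f s) (hs : IsOpen s)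
    (hk : k ≤ n) : ContinuousOn (iteratedDeriv k f) s :=
  (hf.continuousOn_iteratedDerivWithin hk hs.uniqueDiffOn).congr
    (iteratedDerivWithin_of_isOpen hs).symm

end IteratedDeriv

section TrapezoidKernel

/-- The Peano kernel of the trapezoidal rule on `[a, b]`: the quadratic polynomial with second
derivative `1` that vanishes at both endpoints. -/
noncomputable def trapezoidKernel (a b x : ℝ) : ℝ := (x - a) * (x - b) / 2

variable {a b x : ℝ}

@[simp]
lemma trapezoidKernel_left (a b : ℝ) : trapezoidKernel a b a = 0 := by
  simp [trapezoidKernel]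

@[simp]
lemma trapezoidKernel_right (a b : ℝ) : trapezoidKernel a b b = 0 := by
  simp [trapezoidKernel]

lemma hasDerivAt_trapezoidKernel (a b x : ℝ) :
    HasDerivAt (trapezoidKernel a b) (x - (a + b) / 2) x :=
  ((((hasDerivAt_id' x).sub_const a).mul ((hasDerivAt_id' x).sub_const b)).div_const 2).congr_deriv
    (by ring)

lemma continuous_trapezoidKernel (a b : ℝ) : Continuous (trapezoidKernel a b) :=
  continuous_iff_continuousAt.2 fun x => (hasDerivAt_trapezoidKernel a b x).continuousAt

lemma abs_trapezoidKernel_le (hx : x ∈ Icc a b) : |trapezoidKernel a b x| ≤ (b - a) ^ 2 / 8 := by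
  have kernel_nonpos : trapezoidKernel a b x ≤ 0 :=
    div_nonpos_of_nonpos_of_nonneg
      (mul_nonpos_of_nonneg_of_nonpos (sub_nonneg.2 hx.1) (sub_nonpos.2 hx.2)) zero_le_two
  have complete_square :
      trapezoidKernel a b x = (x - (a + b) / 2) ^ 2 / 2 - (b - a) ^ 2 / 8 := by
    rw [trapezoidKernel]; ring
  rw [abs_of_nonpos kernel_nonpos, complete_square]
  linarith [sq_nonneg (x - (a + b) / 2)]

end TrapezoidKernel

section TrapezoidError

variable {X : Type*} [NormedAddCommGroup X] [NormedSpace ℝ X] {a b x : ℝ} {f f₁ f₂ f₃ : ℝ → X}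

/-- The function `P` with `P' = trapezoidKernel a b • f'''` obtained by integrating by parts twice;
`f₁` and `f₂` stand for `f'` and `f''`. -/
noncomputable def trapezoidPrimitive (a b : ℝ) (f f₁ f₂ : ℝ → X) (x : ℝ) : X :=
  f x - (x - (a + b) / 2) • f₁ x + trapezoidKernel a b x • f₂ x

lemma trapezoidPrimitive_right_sub_left (a b : ℝ) (f f₁ f₂ : ℝ → X) :
    trapezoidPrimitive a b f f₁ f₂ b - trapezoidPrimitive a b f f₁ f₂ a
      = f b - f a - ((b - a) / 2) • (f₁ a + f₁ b) := by
  simp only [trapezoidPrimitive, trapezoidKernel_left, trapezoidKernel_right]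
  module

lemma hasDerivAt_trapezoidPrimitive (a b : ℝ) {y : X} (hf : HasDerivAt f (f₁ x) x)
    (hf₁ : HasDerivAt f₁ (f₂ x) x) (hf₂ : HasDerivAt f₂ y x) :
    HasDerivAt (trapezoidPrimitive a b f f₁ f₂) (trapezoidKernel a b x • y) x :=
  ((hf.sub (((hasDerivAt_id' x).sub_const ((a + b) / 2)).smul hf₁)).add
    ((hasDerivAt_trapezoidKernel a b x).smul hf₂)).congr_deriv (by module)

lemma continuousOn_trapezoidPrimitive {s : Set ℝ} (a b : ℝ) (hf : ContinuousOn f s)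
    (hf₁ : ContinuousOn f₁ s) (hf₂ : ContinuousOn f₂ s) :
    ContinuousOn (trapezoidPrimitive a b f f₁ f₂) s :=
  (hf.sub (ContinuousOn.smul (by fun_prop) hf₁)).add
    ((continuous_trapezoidKernel a b).continuousOn.smul hf₂)

theorem norm_trapezoid_error_le_integral_kernel (hab : a ≤ b)
    (hf : ∀ x ∈ Icc a b, HasDerivWithinAt f (f₁ x) (Icc a b) x)
    (hf₁ : ∀ x ∈ Icc a b, HasDerivWithinAt f₁ (f₂ x) (Icc a b) x)
    (hf₂ : ContinuousOn f₂ (Icc a b)) (hf₂' : ∀ x ∈ Ioo a b, HasDerivAt f₂ (f₃ x) x)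
    (hf₃ : IntervalIntegrable f₃ volume a b) :
    ‖f b - f a - ((b - a) / 2) • (f₁ a + f₁ b)‖
      ≤ ∫ x in a..b, |trapezoidKernel a b x| * ‖f₃ x‖ := by
  have hP : ∀ x ∈ Ioo a b,
      HasDerivAt (trapezoidPrimitive a b f f₁ f₂) (trapezoidKernel a b x • f₃ x) x := fun x hx =>
    have hx' := Ioo_subset_Icc_self hx
    have hmem := Icc_mem_nhds hx.1 hx.2
    hasDerivAt_trapezoidPrimitive a b ((hf x hx').hasDerivAt hmem) ((hf₁ x hx').hasDerivAt hmem)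
      (hf₂' x hx)
  rw [← trapezoidPrimitive_right_sub_left a b f f₁ f₂]
  refine norm_sub_le_integral_of_norm_deriv_le_of_le hab
    (continuousOn_trapezoidPrimitive a b (HasDerivWithinAt.continuousOn hf)
      (HasDerivWithinAt.continuousOn hf₁) hf₂)
    (fun x hx => (hP x hx).differentiableAt.differentiableWithinAt)
    (.of_forall fun x hx => ?_)
    (hf₃.norm.continuousOn_mul (continuous_trapezoidKernel a b).abs.continuousOn)
  rw [(hP x hx).deriv, norm_smul, Real.norm_eq_abs]

theorem trapezoid_error_banach_general (hab : a ≤ b)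
    (hf : ∀ x ∈ Icc a b, HasDerivWithinAt f (f₁ x) (Icc a b) x)
    (hf₁ : ∀ x ∈ Icc a b, HasDerivWithinAt f₁ (f₂ x) (Icc a b) x)
    (hf₂ : ContinuousOn f₂ (Icc a b)) (hf₂' : ∀ x ∈ Ioo a b, HasDerivAt f₂ (f₃ x) x)
    (hf₃ : IntervalIntegrable f₃ volume a b) :
    ‖f b - f a - ((b - a) / 2) • (f₁ a + f₁ b)‖ ≤ (b - a) ^ 2 / 8 * ∫ x in a..b, ‖f₃ x‖ :=
  calc
    _ ≤ ∫ x in a..b, |trapezoidKernel a b x| * ‖f₃ x‖ :=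
      norm_trapezoid_error_le_integral_kernel hab hf hf₁ hf₂ hf₂' hf₃
    _ ≤ ∫ x in a..b, (b - a) ^ 2 / 8 * ‖f₃ x‖ :=
      intervalIntegral.integral_mono_on hab
        (hf₃.norm.continuousOn_mul (continuous_trapezoidKernel a b).abs.continuousOn)
        (hf₃.norm.const_mul _)
        fun _ hx => mul_le_mul_of_nonneg_right (abs_trapezoidKernel_le hx) (norm_nonneg _)
    _ = (b - a) ^ 2 / 8 * ∫ x in a..b, ‖f₃ x‖ := intervalIntegral.integral_const_mul _ _

end TrapezoidError

/-- Trapezoidal time-discretization error for Banach-space-valued functions: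
if `f` is `C³` on an open set containing `[a,b]`, then
`‖f b - f a - ((b-a)/2)(f' a + f' b)‖ ≤ ((b-a)²/8) ∫ₐᵇ ‖f''' s‖ ds`. -/
theorem trapezoid_error_banach (X : Type*) [NormedAddCommGroup X] [NormedSpace ℝ X]
    [CompleteSpace X] (a b : ℝ) (hab : a < b) (f : ℝ → X)
    (hf : ∃ s : Set ℝ, IsOpen s ∧ Set.Icc a b ⊆ s ∧ ContDiffOn ℝ 3 f s) :
    ‖f b - f a - ((b - a) / 2) • (deriv f a + deriv f b)‖
      ≤ (b - a) ^ 2 / 8 * ∫ s in a..b, ‖iteratedDeriv 3 f s‖ := by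
  obtain ⟨s, hs, hsub, hf⟩ := hf
  have hderiv (k : ℕ) (hk : k < (3 : WithTop ℕ∞)) : ∀ x ∈ Icc a b,
      HasDerivAt (iteratedDeriv k f) (iteratedDeriv (k + 1) f x) x :=
    fun x hx => hasDerivAt_iteratedDeriv_of_isOpen hf hs hk (hsub hx)
  have hcont : ContinuousOn (iteratedDeriv 3 f) (uIcc a b) :=
    (continuousOn_iteratedDeriv_of_isOpen hf hs le_rfl).mono (uIcc_of_le hab.le ▸ hsub)
  simpa only [zero_add, Nat.reduceAdd, iteratedDeriv_zero, iteratedDeriv_one] using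
    trapezoid_error_banach_general hab.le
      (fun x hx => (hderiv 0 (by norm_num) x hx).hasDerivWithinAt)
      (fun x hx => (hderiv 1 (by norm_num) x hx).hasDerivWithinAt)
      (HasDerivAt.continuousOn (hderiv 2 (by norm_num)))
      (fun x hx => hderiv 2 (by norm_num) x (Ioo_subset_Icc_self hx))
      hcont.intervalIntegrable
end
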